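/- Let n ≥ 1 and B = B(0,1) ⊂ ℝ^n. There exists a constant C > 0 depending only on n such that for every Young function φ and every measurable u : ℝ^n → [0,∞) vanishing outside B, the function Tu(y) = ∫_B ‖z − y‖^{1−n}·u(z) dz satisfies ‖Tu‖_{L^φ(B)} ≤ C·‖u‖_{L^φ(B)}, where the Luxemburg norms are taken with respect to Lebesgue measure on B. In particular the constant C does not depend on φ. -/

import Mathlib

open MeasureTheory ENNReal

/-- A Young function: a convex, even, nonnegative function `φ : ℝ → [0,∞)`
with `φ t = 0` iff `t = 0`. -/
def IsYoungFunction (φ : ℝ → ℝ) : Prop :=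
  ConvexOn ℝ Set.univ φ ∧ (∀ t, φ (-t) = φ t) ∧ (∀ t, 0 ≤ φ t) ∧ (∀ t, φ t = 0 ↔ t = 0)

/-- The Luxemburg norm `‖f‖_{L^φ} = inf{α > 0 : ∫ φ(f/α) dμ ≤ 1}`,
with the convention `inf ∅ = ∞`. -/
noncomputable def luxNorm {Z : Type*} [MeasurableSpace Z] (φ : ℝ → ℝ) (μ : Measure Z)
    (f : Z → ℝ) : ℝ≥0∞ :=
  sInf (ENNReal.ofReal '' {α : ℝ | 0 < α ∧ ∫⁻ x, ENNReal.ofReal (φ (f x / α)) ∂μ ≤ 1})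

/-- The Luxemburg norm of a `[0,∞]`-valued function, where any set of positive
measure on which the function is infinite forces the modular to be infinite. -/
noncomputable def eluxNorm {Z : Type*} [MeasurableSpace Z] (φ : ℝ → ℝ) (μ : Measure Z)
    (g : Z → ℝ≥0∞) : ℝ≥0∞ :=
  sInf (ENNReal.ofReal '' {α : ℝ | 0 < α ∧
    ∫⁻ x, (if g x = ⊤ then ⊤ else ENNReal.ofReal (φ ((g x).toReal / α))) ∂μ ≤ 1})

/-!
A Young function, extended by `φ ∞ = ∞`, is the supremum of its affine minorants `m t - c` with
`m, c ≥ 0`; this gives Jensen's inequality for weights of total mass at most one. If both marginals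
of a kernel are at most one, then Jensen's inequality in one variable followed by Tonelli's theorem
shows that the integral operator does not increase the modular of any Young function, and by
homogeneity an operator with marginals at most `M` has Luxemburg norm at most `M`. The marginals of
`‖z - y‖ ^ s` over a bounded set are bounded as soon as `s` exceeds minus the dimension, by a
translation and integration in polar coordinates, and this bound never sees `φ`.
-/

open Set Metric Module
open scoped NNReal

lemma convexOn_exists_supporting_line {S : Set ℝ} {f : ℝ → ℝ} (hf : ConvexOn ℝ S f) {a : ℝ}
    (ha : a ∈ interior S) : ∃ m : ℝ, ∀ t ∈ S, m * (t - a) ≤ f t - f a := by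
  refine ⟨derivWithin f (Ioi a) a, fun t ht => ?_⟩
  rcases lt_trichotomy t a with hta | rfl | hat
  · have hslope : slope f t a ≤ derivWithin f (Ioi a) a :=
      (hf.slope_le_leftDeriv_of_mem_interior ht ha hta).trans
        (hf.leftDeriv_le_rightDeriv_of_mem_interior ha)
    rw [slope_def_field, div_le_iff₀ (sub_pos.2 hta)] at hslope
    linarith
  · simp
  · have hslope := hf.rightDeriv_le_slope_of_mem_interior ha ht hat
    rwa [slope_def_field, le_div_iff₀ (sub_pos.2 hat)] at hslope

/-- The extension of `φ` to `[0, ∞]` by the value `∞` at `∞`: the integrand of the modular of a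
`[0, ∞]`-valued function. -/
noncomputable def ennrealExtend (φ : ℝ → ℝ) (t : ℝ≥0∞) : ℝ≥0∞ :=
  if t = ⊤ then ⊤ else ENNReal.ofReal (φ t.toReal)

@[simp]
lemma ennrealExtend_top (φ : ℝ → ℝ) : ennrealExtend φ ⊤ = ⊤ := if_pos rfl

lemma ennrealExtend_of_ne_top (φ : ℝ → ℝ) {t : ℝ≥0∞} (ht : t ≠ ⊤) :
    ennrealExtend φ t = ENNReal.ofReal (φ t.toReal) := if_neg ht

namespace IsYoungFunction

variable {φ : ℝ → ℝ}

lemma map_zero (hφ : IsYoungFunction φ) : φ 0 = 0 := (hφ.2.2.2 0).2 rfl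

lemma map_abs (hφ : IsYoungFunction φ) (t : ℝ) : φ |t| = φ t := by
  rcases abs_choice t with h | h <;> simp only [h, hφ.2.1]

lemma measurable (hφ : IsYoungFunction φ) : Measurable φ :=
  (continuousOn_univ.1 (hφ.1.continuousOn isOpen_univ)).measurable

lemma measurable_ennrealExtend (hφ : IsYoungFunction φ) : Measurable (ennrealExtend φ) :=
  Measurable.ite (measurableSet_singleton ⊤) measurable_const
    (hφ.measurable.comp ENNReal.measurable_toReal).ennreal_ofReal

lemma exists_supporting_line (hφ : IsYoungFunction φ) {a : ℝ} (ha : 0 < a) :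
    ∃ m c : ℝ≥0, 0 < m ∧ φ a + c = m * a ∧ ∀ t, m * t ≤ φ t + c := by
  obtain ⟨m, hm⟩ := convexOn_exists_supporting_line hφ.1 (a := a) (by simp)
  have hφa : 0 < φ a := (hφ.2.2.1 a).lt_of_ne fun h => ha.ne' ((hφ.2.2.2 a).1 h.symm)
  have hφa_le : φ a ≤ m * a := by linarith [hm 0 (mem_univ 0), hφ.map_zero]
  have hm_pos : 0 < m := pos_of_mul_pos_left (hφa.trans_le hφa_le) ha.le
  have hc : ((m * a - φ a).toNNReal : ℝ) = m * a - φ a :=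
    Real.coe_toNNReal _ (sub_nonneg.2 hφa_le)
  lift m to ℝ≥0 using hm_pos.le
  exact ⟨m, (m * a - φ a).toNNReal, hm_pos, by linarith,
    fun t => by linarith [hm t (mem_univ t)]⟩

lemma exists_supporting_line_ennrealExtend (hφ : IsYoungFunction φ) {a : ℝ} (ha : 0 < a) :
    ∃ m c : ℝ≥0, 0 < m ∧ ENNReal.ofReal (φ a) + c = m * ENNReal.ofReal a ∧
      ∀ t, m * t ≤ ennrealExtend φ t + c := by
  obtain ⟨m, c, hm, heq, hle⟩ := hφ.exists_supporting_line ha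
  have hadd (t : ℝ) : ENNReal.ofReal (φ t) + c = ENNReal.ofReal (φ t + c) := by
    rw [ENNReal.ofReal_add (hφ.2.2.1 t) c.coe_nonneg, ENNReal.ofReal_coe_nnreal]
  have hmul (t : ℝ) : m * ENNReal.ofReal t = ENNReal.ofReal (m * t) := by
    rw [ENNReal.ofReal_mul m.coe_nonneg, ENNReal.ofReal_coe_nnreal]
  refine ⟨m, c, hm, by rw [hadd, hmul, heq], fun t => ?_⟩
  rcases eq_or_ne t ⊤ with rfl | ht
  · simp
  · rw [ennrealExtend_of_ne_top φ ht, hadd]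
    nth_rw 1 [← ENNReal.ofReal_toReal ht]
    exact (hmul _).trans_le (ENNReal.ofReal_le_ofReal (hle _))

lemma ennrealExtend_le_of_forall_affine (hφ : IsYoungFunction φ) {t b : ℝ≥0∞}
    (h : ∀ m c : ℝ≥0, (∀ r, m * r ≤ ennrealExtend φ r + c) → m * t ≤ b + c) :
    ennrealExtend φ t ≤ b := by
  rcases eq_or_ne t ⊤ with rfl | ht
  · obtain ⟨m, c, hm, -, hle⟩ := hφ.exists_supporting_line_ennrealExtend one_pos
    have hb : b + c = ⊤ := by
      simpa [ENNReal.mul_top (ENNReal.coe_pos.2 hm).ne'] using h m c hle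
    simpa using hb
  rw [ennrealExtend_of_ne_top φ ht]
  rcases (ENNReal.toReal_nonneg (a := t)).eq_or_lt with h0 | hpos
  · simp [← h0, hφ.map_zero]
  · obtain ⟨m, c, -, heq, hle⟩ := hφ.exists_supporting_line_ennrealExtend hpos
    rw [ENNReal.ofReal_toReal ht] at heq
    exact (ENNReal.add_le_add_iff_right ENNReal.coe_ne_top).1 (heq.trans_le (h m c hle))

lemma ennrealExtend_lintegral_mul_le (hφ : IsYoungFunction φ) {Z : Type*} [MeasurableSpace Z]
    {μ : Measure Z} {w : Z → ℝ≥0∞} (hw : AEMeasurable w μ) (hw_le : ∫⁻ z, w z ∂μ ≤ 1)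
    (v : Z → ℝ≥0∞) :
    ennrealExtend φ (∫⁻ z, w z * v z ∂μ) ≤ ∫⁻ z, w z * ennrealExtend φ (v z) ∂μ := by
  refine hφ.ennrealExtend_le_of_forall_affine fun m c hmc => ?_
  calc m * ∫⁻ z, w z * v z ∂μ
      = ∫⁻ z, w z * (m * v z) ∂μ := by
        simp_rw [← lintegral_const_mul' (m : ℝ≥0∞) _ ENNReal.coe_ne_top, mul_left_comm]
    _ ≤ ∫⁻ z, w z * ennrealExtend φ (v z) + c * w z ∂μ := by
        refine lintegral_mono fun z => ?_
        rw [mul_comm (c : ℝ≥0∞), ← mul_add]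
        gcongr
        exact hmc (v z)
    _ = ∫⁻ z, w z * ennrealExtend φ (v z) ∂μ + c * ∫⁻ z, w z ∂μ := by
        rw [lintegral_add_right' _ (hw.const_mul _), lintegral_const_mul' _ _ ENNReal.coe_ne_top]
    _ ≤ ∫⁻ z, w z * ennrealExtend φ (v z) ∂μ + c := by
        gcongr
        exact mul_le_of_le_one_right' hw_le

end IsYoungFunction

section LuxemburgNorm

variable {Z : Type*} [MeasurableSpace Z] (φ : ℝ → ℝ) (μ : Measure Z)

lemma eluxNorm_eq_sInf (g : Z → ℝ≥0∞) :
    eluxNorm φ μ g = sInf {a | a ≠ 0 ∧ a ≠ ⊤ ∧ ∫⁻ x, ennrealExtend φ (g x / a) ∂μ ≤ 1} := by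
  have hintegrand {α : ℝ} (hα : 0 < α) (t : ℝ≥0∞) : ennrealExtend φ (t / ENNReal.ofReal α) =
      if t = ⊤ then ⊤ else ENNReal.ofReal (φ (t.toReal / α)) := by
    simp [ennrealExtend, ENNReal.div_eq_top, hα.not_ge, ENNReal.toReal_div, hα.le]
  refine congrArg sInf (Set.ext fun a => ⟨?_, fun ⟨ha0, ha_top, ha⟩ => ?_⟩)
  · rintro ⟨α, ⟨hα, hle⟩, rfl⟩
    exact ⟨(ENNReal.ofReal_pos.2 hα).ne', ENNReal.ofReal_ne_top, by simpa only [hintegrand hα]⟩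
  · have ha_pos : 0 < a.toReal := ENNReal.toReal_pos ha0 ha_top
    refine ⟨a.toReal, ⟨ha_pos, ?_⟩, ENNReal.ofReal_toReal ha_top⟩
    simpa only [← hintegrand ha_pos, ENNReal.ofReal_toReal ha_top]

lemma eluxNorm_const_mul_le {M : ℝ≥0∞} (hM0 : M ≠ 0) (hM : M ≠ ⊤) (g : Z → ℝ≥0∞) :
    eluxNorm φ μ (fun x => M * g x) ≤ M * eluxNorm φ μ g := by
  rw [eluxNorm_eq_sInf φ μ g, sInf_eq_iInf', ENNReal.mul_iInf_of_ne hM0 hM, eluxNorm_eq_sInf]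
  refine le_iInf fun ⟨a, ha0, ha, hle⟩ =>
    sInf_le ⟨mul_ne_zero hM0 ha0, ENNReal.mul_ne_top hM ha, ?_⟩
  simpa only [ENNReal.mul_div_mul_left _ _ hM0 hM]

variable {φ μ} in
lemma luxNorm_eq_eluxNorm_enorm (hφ : IsYoungFunction φ) (f : Z → ℝ) :
    luxNorm φ μ f = eluxNorm φ μ fun x => ‖f x‖ₑ := by
  have hmodular {α : ℝ} (hα : 0 < α) (x : Z) : φ (‖f x‖ₑ.toReal / α) = φ (f x / α) := by
    rw [toReal_enorm, Real.norm_eq_abs, ← hφ.map_abs (f x / α), abs_div, abs_of_pos hα]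
  unfold luxNorm eluxNorm
  refine congrArg (fun S => sInf (ENNReal.ofReal '' S))
    (Set.ext fun α => and_congr_right fun hα => ?_)
  simp only [enorm_ne_top, if_false, hmodular hα]

end LuxemburgNorm

section SchurTest

variable {X Y : Type*} [MeasurableSpace X] [MeasurableSpace Y] {μ : Measure X} {ν : Measure Y}
  [SFinite μ] [SFinite ν] {φ : ℝ → ℝ} {K : X → Y → ℝ≥0∞} {v : X → ℝ≥0∞}

lemma lintegral_ennrealExtend_lintegral_kernel_le (hφ : IsYoungFunction φ)
    (hK : Measurable (Function.uncurry K)) (hrow : ∀ᵐ y ∂ν, ∫⁻ x, K x y ∂μ ≤ 1)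
    (hcol : ∀ᵐ x ∂μ, ∫⁻ y, K x y ∂ν ≤ 1) (hv : AEMeasurable v μ) :
    ∫⁻ y, ennrealExtend φ (∫⁻ x, K x y * v x ∂μ) ∂ν ≤ ∫⁻ x, ennrealExtend φ (v x) ∂μ := by
  have hφv : AEMeasurable (fun x => ennrealExtend φ (v x)) μ :=
    hφ.measurable_ennrealExtend.comp_aemeasurable hv
  calc ∫⁻ y, ennrealExtend φ (∫⁻ x, K x y * v x ∂μ) ∂ν
      ≤ ∫⁻ y, ∫⁻ x, K x y * ennrealExtend φ (v x) ∂μ ∂ν := by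
        refine lintegral_mono_ae (hrow.mono fun y hy => ?_)
        exact hφ.ennrealExtend_lintegral_mul_le hK.of_uncurry_right.aemeasurable hy v
    _ = ∫⁻ x, ∫⁻ y, K x y * ennrealExtend φ (v x) ∂ν ∂μ :=
        (lintegral_lintegral_swap (hK.aemeasurable.mul hφv.comp_fst)).symm
    _ = ∫⁻ x, (∫⁻ y, K x y ∂ν) * ennrealExtend φ (v x) ∂μ := by
        simp_rw [lintegral_mul_const _ hK.of_uncurry_left]
    _ ≤ ∫⁻ x, ennrealExtend φ (v x) ∂μ :=
        lintegral_mono_ae (hcol.mono fun x hx => mul_le_of_le_one_left' hx)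

lemma eluxNorm_lintegral_kernel_le_of_marginals_le_one (hφ : IsYoungFunction φ)
    (hK : Measurable (Function.uncurry K)) (hrow : ∀ᵐ y ∂ν, ∫⁻ x, K x y ∂μ ≤ 1)
    (hcol : ∀ᵐ x ∂μ, ∫⁻ y, K x y ∂ν ≤ 1) (hv : AEMeasurable v μ) :
    eluxNorm φ ν (fun y => ∫⁻ x, K x y * v x ∂μ) ≤ eluxNorm φ μ v := by
  simp only [eluxNorm_eq_sInf]
  refine sInf_le_sInf fun a ⟨ha0, ha, hle⟩ => ⟨ha0, ha, le_trans ?_ hle⟩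
  have hdiv (y : Y) : (∫⁻ x, K x y * v x ∂μ) / a = ∫⁻ x, K x y * (v x / a) ∂μ := by
    simp_rw [div_eq_mul_inv, ← mul_assoc, lintegral_mul_const' _ _ (ENNReal.inv_ne_top.2 ha0)]
  simpa only [hdiv] using
    lintegral_ennrealExtend_lintegral_kernel_le hφ hK hrow hcol (hv.div_const a)

lemma eluxNorm_lintegral_kernel_le (hφ : IsYoungFunction φ) (hK : Measurable (Function.uncurry K))
    {M : ℝ≥0∞} (hM0 : M ≠ 0) (hM : M ≠ ⊤) (hrow : ∀ᵐ y ∂ν, ∫⁻ x, K x y ∂μ ≤ M)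
    (hcol : ∀ᵐ x ∂μ, ∫⁻ y, K x y ∂ν ≤ M) (hv : AEMeasurable v μ) :
    eluxNorm φ ν (fun y => ∫⁻ x, K x y * v x ∂μ) ≤ M * eluxNorm φ μ v := by
  have hM_inv : M⁻¹ ≠ ⊤ := ENNReal.inv_ne_top.2 hM0
  have hnormalize {I : ℝ≥0∞} (hI : I ≤ M) : M⁻¹ * I ≤ 1 :=
    (mul_le_mul_right hI _).trans_eq (ENNReal.inv_mul_cancel hM0 hM)
  calc eluxNorm φ ν (fun y => ∫⁻ x, K x y * v x ∂μ)
      = eluxNorm φ ν (fun y => M * ∫⁻ x, M⁻¹ * K x y * v x ∂μ) := by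
        simp_rw [mul_assoc, lintegral_const_mul' _ _ hM_inv,
          ENNReal.mul_inv_cancel_left hM0 hM]
    _ ≤ M * eluxNorm φ ν (fun y => ∫⁻ x, M⁻¹ * K x y * v x ∂μ) :=
        eluxNorm_const_mul_le φ ν hM0 hM _
    _ ≤ M * eluxNorm φ μ v := by
        gcongr
        refine eluxNorm_lintegral_kernel_le_of_marginals_le_one hφ (hK.const_mul M⁻¹) ?_ ?_ hv
        · exact hrow.mono fun y hy => by
            simpa only [lintegral_const_mul' _ _ hM_inv] using hnormalize hy
        · exact hcol.mono fun x hx => by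
            simpa only [lintegral_const_mul' _ _ hM_inv] using hnormalize hx

end SchurTest

section RieszKernel

variable {E : Type*} [NormedAddCommGroup E] [MeasurableSpace E] [BorelSpace E]

lemma setLIntegral_comp_sub_le {μ : Measure E} [μ.IsAddRightInvariant] {Ω : Set E} {y : E} {r : ℝ}
    (hΩ : Ω ⊆ ball y r) (f : E → ℝ≥0∞) :
    ∫⁻ z in Ω, f (z - y) ∂μ ≤ ∫⁻ w in ball 0 r, f w ∂μ := by
  have hpreimage : (· - y) ⁻¹' ball 0 r = ball y r := by
    ext z
    simp [dist_eq_norm]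
  calc ∫⁻ z in Ω, f (z - y) ∂μ
      ≤ ∫⁻ z in ball y r, f (z - y) ∂μ := lintegral_mono_set hΩ
    _ = ∫⁻ w in ball 0 r, f w ∂μ := by
        rw [← hpreimage, (measurePreserving_sub_right μ y).setLIntegral_comp_preimage_emb
          (MeasurableEquiv.subRight y).measurableEmbedding]

variable [NormedSpace ℝ E] [FiniteDimensional ℝ E] (μ : Measure E) [μ.IsAddHaarMeasure]

lemma integrableOn_ball_norm_rpow {s : ℝ} (hs : -(finrank ℝ E : ℝ) < s) (r : ℝ) :
    IntegrableOn (fun w : E => ‖w‖ ^ s) (ball 0 r) μ := by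
  rcases subsingleton_or_nontrivial E with hE | hE
  · exact (integrableOn_const (C := ‖(0 : E)‖ ^ s) measure_ball_lt_top.ne).congr_fun
      (fun w _ => by rw [Subsingleton.elim w 0]) measurableSet_ball
  · refine integrableOn_ball_of_norm_le_rpow (C := 1) (α := -s) finrank_pos (by linarith)
      (ae_of_all _ fun w => ?_) (measurable_norm.pow_const s).aestronglyMeasurable
    rw [neg_neg, one_mul, Real.norm_of_nonneg (by positivity)]

lemma exists_ae_setLIntegral_norm_sub_rpow_le {s : ℝ} (hs : -(finrank ℝ E : ℝ) < s) {Ω : Set E}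
    (hΩ : Bornology.IsBounded Ω) :
    ∃ C : ℝ, 0 < C ∧ ∀ᵐ y ∂μ.restrict Ω,
      ∫⁻ z in Ω, ENNReal.ofReal (‖z - y‖ ^ s) ∂μ ≤ ENNReal.ofReal C := by
  obtain ⟨R, hR⟩ := hΩ.subset_ball 0
  set L := ∫⁻ w in ball (0 : E) (R + R), ENNReal.ofReal (‖w‖ ^ s) ∂μ
  have hL : L ≠ ⊤ := (integrableOn_ball_norm_rpow μ hs (R + R)).lintegral_lt_top.ne
  refine ⟨L.toReal + 1, by positivity, ?_⟩
  filter_upwards [ae_restrict_of_ae_restrict_of_subset hR (ae_restrict_mem measurableSet_ball)]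
    with y hy
  have hΩy : Ω ⊆ ball y (R + R) := fun z hz =>
    (dist_triangle_right z y 0).trans_lt (add_lt_add (hR hz) hy)
  calc ∫⁻ z in Ω, ENNReal.ofReal (‖z - y‖ ^ s) ∂μ
      ≤ L := setLIntegral_comp_sub_le hΩy fun w => ENNReal.ofReal (‖w‖ ^ s)
    _ = ENNReal.ofReal L.toReal := (ENNReal.ofReal_toReal hL).symm
    _ ≤ ENNReal.ofReal (L.toReal + 1) := ENNReal.ofReal_le_ofReal (by linarith)

theorem riesz_potential_orlicz_bounded_general {s : ℝ} (hs : -(finrank ℝ E : ℝ) < s) {Ω : Set E}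
    (hΩ : Bornology.IsBounded Ω) :
    ∃ C : ℝ, 0 < C ∧ ∀ φ : ℝ → ℝ, IsYoungFunction φ →
      ∀ u : E → ℝ, AEMeasurable u (μ.restrict Ω) →
        eluxNorm φ (μ.restrict Ω)
            (fun y => ∫⁻ z in Ω, ENNReal.ofReal (‖z - y‖ ^ s) * ‖u z‖ₑ ∂μ) ≤
          ENNReal.ofReal C * luxNorm φ (μ.restrict Ω) u := by
  obtain ⟨C, hC, hrow⟩ := exists_ae_setLIntegral_norm_sub_rpow_le μ hs hΩ
  refine ⟨C, hC, fun φ hφ u hu => ?_⟩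
  have hK : Measurable (Function.uncurry fun z y : E => ENNReal.ofReal (‖z - y‖ ^ s)) :=
    ((measurable_fst.sub measurable_snd).norm.pow_const s).ennreal_ofReal
  have hcol : ∀ᵐ z ∂μ.restrict Ω,
      ∫⁻ y in Ω, ENNReal.ofReal (‖z - y‖ ^ s) ∂μ ≤ ENNReal.ofReal C := by
    simpa only [norm_sub_rev] using hrow
  rw [luxNorm_eq_eluxNorm_enorm hφ]
  exact eluxNorm_lintegral_kernel_le hφ hK (ENNReal.ofReal_pos.2 hC).ne' ENNReal.ofReal_ne_top
    hrow hcol hu.enorm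

end RieszKernel

/-- Orlicz boundedness of the Riesz-type potential `Tu(y) = ∫_B ‖z−y‖^{1−n} u(z) dz`
on the unit ball `B ⊂ ℝ^n`, with a constant independent of the Young function `φ`. -/
theorem riesz_potential_orlicz_bounded (n : ℕ) (hn : 1 ≤ n) :
    ∃ C : ℝ, 0 < C ∧ ∀ φ : ℝ → ℝ, IsYoungFunction φ →
      ∀ u : EuclideanSpace ℝ (Fin n) → ℝ, Measurable u → (∀ x, 0 ≤ u x) →
        (∀ x, x ∉ Metric.ball (0 : EuclideanSpace ℝ (Fin n)) 1 → u x = 0) →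
        eluxNorm φ (volume.restrict (Metric.ball (0 : EuclideanSpace ℝ (Fin n)) 1))
            (fun y => ∫⁻ z in Metric.ball (0 : EuclideanSpace ℝ (Fin n)) 1,
              ENNReal.ofReal (‖z - y‖ ^ ((1 : ℝ) - n)) * ENNReal.ofReal (u z)) ≤
          ENNReal.ofReal C *
            luxNorm φ (volume.restrict (Metric.ball (0 : EuclideanSpace ℝ (Fin n)) 1)) u := by
  obtain ⟨C, hC, h⟩ := riesz_potential_orlicz_bounded_general
    (volume : Measure (EuclideanSpace ℝ (Fin n))) (s := 1 - n) (by simp) isBounded_ball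
  refine ⟨C, hC, fun φ hφ u hu hu0 _ => ?_⟩
  simpa only [Real.enorm_of_nonneg (hu0 _)] using h φ hφ u hu.aemeasurable
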